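/- arXiv:2105.09985 — 3 statements merged into one kernel-verified Lean document; each statement's English description precedes it below -/
import Mathlib

section
/- Suppose that for each ℓ ∈ {0,1} and each b ∈ {0,1}, P(Y | V ∩ V̂ᵇ ∩ L_ℓ) = P(Y | V̂ᵇ ∩ L_ℓ) (i.e., y is conditionally independent of the covariate given the proxy and the group), and that for each ℓ ∈ {0,1} the conditional recall of the proxy is at least 1 − r, i.e., P(V̂ᶜ | V ∩ L_ℓ) ≤ r. Then |G − Ĝ| ≤ 2r. -/
open MeasureTheory

/-- Conditional probability `P(A | B) = μ(A ∩ B) / μ(B)` as a real number. -/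
noncomputable def condP {Ω : Type*} [MeasurableSpace Ω] (μ : Measure Ω) (A B : Set Ω) : ℝ :=
  (μ (A ∩ B)).toReal / (μ B).toReal

/-- `ev S true = S` (the event `s = 1`) and `ev S false = Sᶜ` (the event `s = 0`). -/
def ev {Ω : Type*} (S : Set Ω) (b : Bool) : Set Ω := bif b then S else Sᶜ

/-!
Write `P` for conditional probability and let `p = P(Y | A ∩ B)`. By the chain rule
`P(Y | B) - p = P(Y ∩ Aᶜ | B) - p * P(Aᶜ | B)`, a difference of two numbers in `[0, P(Aᶜ | B)]`, so
conditioning on `A` as well as on `B` moves the probability of `Y` by at most `P(Aᶜ | B)`.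
For `A = V̂` and `B = V ∩ L_ℓ` this error is one minus the recall, and independence identifies
`p` with `P(Y | V̂ ∩ L_ℓ)`.
-/

section CondP

variable {Ω : Type*} [MeasurableSpace Ω] {μ : Measure Ω} {A B Y : Set Ω}

theorem condP_nonneg : 0 ≤ condP μ A B :=
  div_nonneg measureReal_nonneg measureReal_nonneg

variable [IsFiniteMeasure μ]

theorem condP_le_one : condP μ A B ≤ 1 :=
  div_le_one_of_le₀ (measureReal_mono Set.inter_subset_right) measureReal_nonneg

theorem condP_mono {A' : Set Ω} (h : A ⊆ A') : condP μ A B ≤ condP μ A' B :=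
  div_le_div_of_nonneg_right (measureReal_mono (Set.inter_subset_inter_left B h))
    measureReal_nonneg

theorem condP_inter_add_condP_inter_compl (hA : MeasurableSet A) :
    condP μ (Y ∩ A) B + condP μ (Y ∩ Aᶜ) B = condP μ Y B := by
  have measure_split : μ.real (Y ∩ A ∩ B) + μ.real (Y ∩ Aᶜ ∩ B) = μ.real (Y ∩ B) := by
    rw [Set.inter_right_comm Y A, Set.inter_right_comm Y Aᶜ, ← Set.sdiff_eq]
    exact measureReal_inter_add_sdiff hA
  simp only [condP, ← measureReal_def, ← add_div, measure_split]

theorem condP_add_condP_compl (hA : MeasurableSet A) (hB : μ B ≠ 0) :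
    condP μ A B + condP μ Aᶜ B = 1 := by
  have condP_univ : condP μ Set.univ B = 1 := by
    rw [condP, Set.univ_inter]
    exact div_self (ENNReal.toReal_ne_zero.2 ⟨hB, measure_ne_top μ B⟩)
  simpa only [Set.univ_inter, condP_univ] using
    condP_inter_add_condP_inter_compl (μ := μ) (B := B) (Y := Set.univ) hA

theorem condP_inter_eq_mul : condP μ (Y ∩ A) B = condP μ Y (A ∩ B) * condP μ A B := by
  have inter_null (h : μ.real (A ∩ B) = 0) : μ.real (Y ∩ (A ∩ B)) = 0 :=
    measureReal_mono_null Set.inter_subset_right h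
  simp only [condP, ← measureReal_def, Set.inter_assoc]
  rw [← mul_div_assoc, div_mul_cancel_of_imp inter_null]

theorem abs_condP_sub_condP_inter_le (hA : MeasurableSet A) (hB : μ B ≠ 0) :
    |condP μ Y B - condP μ Y (A ∩ B)| ≤ condP μ Aᶜ B := by
  have total_probability : condP μ (Y ∩ A) B + condP μ (Y ∩ Aᶜ) B = condP μ Y B :=
    condP_inter_add_condP_inter_compl hA
  have chain_rule : condP μ (Y ∩ A) B = condP μ Y (A ∩ B) * condP μ A B := condP_inter_eq_mul
  have difference_eq : condP μ Y B - condP μ Y (A ∩ B) =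
      condP μ (Y ∩ Aᶜ) B - condP μ Y (A ∩ B) * condP μ Aᶜ B := by
    linear_combination chain_rule - total_probability
      + condP μ Y (A ∩ B) * condP_add_condP_compl hA hB
  rw [difference_eq]
  exact abs_sub_le_of_nonneg_of_le condP_nonneg (condP_mono Set.inter_subset_right)
    (mul_nonneg condP_nonneg condP_nonneg) (mul_le_of_le_one_left condP_nonneg condP_le_one)

theorem abs_condP_sub_condP_le_of_condP_inter_eq {V Vh L : Set Ω} (hVh : MeasurableSet Vh)
    (hpos : 0 < μ (V ∩ Vh ∩ L)) (hind : condP μ Y (V ∩ Vh ∩ L) = condP μ Y (Vh ∩ L)) :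
    |condP μ Y (V ∩ L) - condP μ Y (Vh ∩ L)| ≤ condP μ Vhᶜ (V ∩ L) := by
  have slice_eq : V ∩ Vh ∩ L = Vh ∩ (V ∩ L) := by
    rw [Set.inter_comm V, Set.inter_assoc]
  have hVL : μ (V ∩ L) ≠ 0 :=
    (hpos.trans_le (measure_mono (Set.inter_subset_inter_left L Set.inter_subset_left))).ne'
  rw [← hind, slice_eq]
  exact abs_condP_sub_condP_inter_le hVh hVL

end CondP

theorem stmt_3_general {Ω ι : Type*} [MeasurableSpace Ω] (μ : Measure Ω) [IsFiniteMeasure μ]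
    (Y V Vh : Set Ω) (L : ι → Set Ω) (r : ℝ) (hVh : MeasurableSet Vh)
    (hpos : ∀ l, 0 < μ (V ∩ Vh ∩ L l))
    (hind : ∀ l, condP μ Y (V ∩ Vh ∩ L l) = condP μ Y (Vh ∩ L l))
    (hrec : ∀ l, condP μ Vhᶜ (V ∩ L l) ≤ r) (i j : ι) :
    |(condP μ Y (V ∩ L i) - condP μ Y (V ∩ L j))
      - (condP μ Y (Vh ∩ L i) - condP μ Y (Vh ∩ L j))| ≤ 2 * r := by
  have group_error (l : ι) : |condP μ Y (V ∩ L l) - condP μ Y (Vh ∩ L l)| ≤ r :=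
    (abs_condP_sub_condP_le_of_condP_inter_eq hVh (hpos l) (hind l)).trans (hrec l)
  rw [sub_sub_sub_comm, two_mul]
  exact (abs_sub _ _).trans (add_le_add (group_error i) (group_error j))

/-- If `Y` is conditionally independent of the covariate given the proxy and the group, and
the proxy has conditional recall at least `1 - r` on each slice, then `|G - Ĝ| ≤ 2r`. -/
theorem stmt_3 {Ω : Type*} [MeasurableSpace Ω] (μ : Measure Ω) [IsProbabilityMeasure μ]
    (Y V Vh : Set Ω) (L : Bool → Set Ω) (r : ℝ)
    (hY : MeasurableSet Y) (hV : MeasurableSet V) (hVh : MeasurableSet Vh)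
    (hL : ∀ l, MeasurableSet (L l))
    (hpos1 : ∀ (l b : Bool), 0 < μ (V ∩ ev Vh b ∩ L l))
    (hpos2 : ∀ (l b : Bool), 0 < μ (ev Vh b ∩ L l))
    (hposVL : ∀ l, 0 < μ (V ∩ L l))
    (hposVhL : ∀ l, 0 < μ (Vh ∩ L l))
    (hind : ∀ (l b : Bool),
      condP μ Y (V ∩ ev Vh b ∩ L l) = condP μ Y (ev Vh b ∩ L l))
    (hrec : ∀ l : Bool, condP μ Vhᶜ (V ∩ L l) ≤ r) :
    |(condP μ Y (V ∩ L true) - condP μ Y (V ∩ L false))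
      - (condP μ Y (Vh ∩ L true) - condP μ Y (Vh ∩ L false))| ≤ 2 * r := by
  exact stmt_3_general μ Y V Vh L r hVh (hpos1 · true) (hind · true) hrec true false
end

section
/- Fix ℓ ∈ {0,1} and define δ_ℓ = P(Y | V ∩ L_ℓ) − P(Y | V̂ ∩ L_ℓ). Then δ_ℓ = (p_ℓ − r_ℓ) · P(Y | V ∩ V̂ ∩ L_ℓ) + r_ℓ · P(Y | V ∩ V̂ᶜ ∩ L_ℓ) − p_ℓ · P(Y | Vᶜ ∩ V̂ ∩ L_ℓ). -/
open MeasureTheory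

/-! Conditioning on `V ∩ L` and splitting along `Vh`, or on `Vh ∩ L` and splitting along `V`,
produces the common cell `V ∩ Vh ∩ L`, with weights `1 - r` and `1 - p` for `r = P(Vhᶜ | V ∩ L)`
and `p = P(Vᶜ | Vh ∩ L)`. In the difference of the two laws of total probability its coefficient
is therefore `p - r`. -/

section CondP

variable {Ω : Type*} [MeasurableSpace Ω] {μ : Measure Ω} {B C : Set Ω}

theorem condP_univ (hB₀ : μ B ≠ 0) (hB : μ B ≠ ⊤) : condP μ Set.univ B = 1 := by
  rw [condP, Set.univ_inter, div_self (ENNReal.toReal_ne_zero.mpr ⟨hB₀, hB⟩)]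

theorem condP_inter_add_condP_inter_compl_s6 (A : Set Ω) (hC : NullMeasurableSet C μ)
    (hB : μ B ≠ ⊤) : condP μ (A ∩ C) B + condP μ (A ∩ Cᶜ) B = condP μ A B := by
  have hAB : μ (A ∩ B) ≠ ⊤ := measure_ne_top_of_subset Set.inter_subset_right hB
  have h_add := measureReal_inter_add_sdiff₀ hC hAB
  rw [Set.sdiff_eq, Set.inter_right_comm, Set.inter_right_comm A B] at h_add
  simp only [condP, ← add_div]
  exact congrArg (· / (μ B).toReal) h_add

theorem condP_add_condP_compl_s6 (hC : NullMeasurableSet C μ) (hB₀ : μ B ≠ 0) (hB : μ B ≠ ⊤) :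
    condP μ C B + condP μ Cᶜ B = 1 := by
  simpa only [Set.univ_inter, condP_univ hB₀ hB] using
    condP_inter_add_condP_inter_compl_s6 Set.univ hC hB

theorem condP_mul_condP_inter (A C : Set Ω) (hB : μ B ≠ ⊤) :
    condP μ C B * condP μ A (C ∩ B) = condP μ (A ∩ C) B := by
  have hCB : μ (C ∩ B) ≠ ⊤ := measure_ne_top_of_subset Set.inter_subset_right hB
  have h_null : (μ (C ∩ B)).toReal = 0 → (μ (A ∩ (C ∩ B))).toReal = 0 := fun h ↦
    measureReal_mono_null Set.inter_subset_right h hCB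
  rw [condP, condP, condP, Set.inter_assoc, mul_comm, ← mul_div_assoc,
    div_mul_cancel_of_imp h_null]

theorem condP_eq_condP_mul_add_condP_compl_mul (A : Set Ω) (hC : NullMeasurableSet C μ)
    (hB : μ B ≠ ⊤) :
    condP μ A B
      = condP μ C B * condP μ A (C ∩ B) + condP μ Cᶜ B * condP μ A (Cᶜ ∩ B) := by
  rw [condP_mul_condP_inter A C hB, condP_mul_condP_inter A Cᶜ hB,
    condP_inter_add_condP_inter_compl_s6 A hC hB]

theorem stmt_6_general {V Vh L : Set Ω} (Y : Set Ω)
    (hV : NullMeasurableSet V μ) (hVh : NullMeasurableSet Vh μ)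
    (hVL₀ : μ (V ∩ L) ≠ 0) (hVL : μ (V ∩ L) ≠ ⊤)
    (hVhL₀ : μ (Vh ∩ L) ≠ 0) (hVhL : μ (Vh ∩ L) ≠ ⊤) :
    condP μ Y (V ∩ L) - condP μ Y (Vh ∩ L)
      = (condP μ Vᶜ (Vh ∩ L) - condP μ Vhᶜ (V ∩ L)) * condP μ Y (V ∩ Vh ∩ L)
        + condP μ Vhᶜ (V ∩ L) * condP μ Y (V ∩ Vhᶜ ∩ L)
        - condP μ Vᶜ (Vh ∩ L) * condP μ Y (Vᶜ ∩ Vh ∩ L) := by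
  have h_recall : condP μ Vh (V ∩ L) = 1 - condP μ Vhᶜ (V ∩ L) :=
    eq_sub_of_add_eq (condP_add_condP_compl_s6 hVh hVL₀ hVL)
  have h_precision : condP μ V (Vh ∩ L) = 1 - condP μ Vᶜ (Vh ∩ L) :=
    eq_sub_of_add_eq (condP_add_condP_compl_s6 hV hVhL₀ hVhL)
  have h_split_V := condP_eq_condP_mul_add_condP_compl_mul Y hVh hVL
  have h_split_Vh := condP_eq_condP_mul_add_condP_compl_mul Y hV hVhL
  rw [h_recall, Set.inter_left_comm Vh, Set.inter_left_comm Vhᶜ] at h_split_V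
  rw [h_precision] at h_split_Vh
  simp only [Set.inter_assoc]
  linear_combination h_split_V - h_split_Vh

end CondP

/-- The per-slice estimation error `δ_ℓ = P(Y | V ∩ Lℓ) - P(Y | V̂ ∩ Lℓ)` decomposes as
`(p_ℓ - r_ℓ)·P(Y | V ∩ V̂ ∩ Lℓ) + r_ℓ·P(Y | V ∩ V̂ᶜ ∩ Lℓ) - p_ℓ·P(Y | Vᶜ ∩ V̂ ∩ Lℓ)`. -/
theorem stmt_6 {Ω : Type*} [MeasurableSpace Ω] (μ : Measure Ω) [IsProbabilityMeasure μ]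
    (Y V Vh Ll : Set Ω)
    (hY : MeasurableSet Y) (hV : MeasurableSet V) (hVh : MeasurableSet Vh)
    (hLl : MeasurableSet Ll)
    (hposVL : 0 < μ (V ∩ Ll))
    (hposVhL : 0 < μ (Vh ∩ Ll))
    (hpos11 : 0 < μ (V ∩ Vh ∩ Ll))
    (hpos10 : 0 < μ (V ∩ Vhᶜ ∩ Ll))
    (hpos01 : 0 < μ (Vᶜ ∩ Vh ∩ Ll)) :
    condP μ Y (V ∩ Ll) - condP μ Y (Vh ∩ Ll)
      = (condP μ Vᶜ (Vh ∩ Ll) - condP μ Vhᶜ (V ∩ Ll)) * condP μ Y (V ∩ Vh ∩ Ll)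
        + condP μ Vhᶜ (V ∩ Ll) * condP μ Y (V ∩ Vhᶜ ∩ Ll)
        - condP μ Vᶜ (Vh ∩ Ll) * condP μ Y (Vᶜ ∩ Vh ∩ Ll) :=
  stmt_6_general Y hV.nullMeasurableSet hVh.nullMeasurableSet
    hposVL.ne' (measure_ne_top μ _) hposVhL.ne' (measure_ne_top μ _)
end

section
/- Let γ_A, γ_B1, γ_B2, ε_B1, ε_B2 ∈ [0,1] and g ∈ ℝ, and suppose all of the following hold: (A) p_ℓ ≤ γ_A and r_ℓ ≤ γ_A for each ℓ ∈ {0,1}; (B1) |p_ℓ − r_ℓ| ≤ γ_B1 for each ℓ ∈ {0,1}, and the diagonals are ε_B1-close on each slice, i.e., |P(Y | V ∩ V̂ᶜ ∩ L_ℓ) − P(Y | Vᶜ ∩ V̂ ∩ L_ℓ)| ≤ ε_B1 for each ℓ ∈ {0,1}; (B2) |p₀ − p₁| ≤ γ_B2 and |r₀ − r₁| ≤ γ_B2, and model closeness holds with gap g and error ε_B2, i.e., for each (a,b) ∈ {(1,1),(1,0),(0,1)}: |P(Y | Vᵃ ∩ V̂ᵇ ∩ L₁) − P(Y | Vᵃ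 ∩ V̂ᵇ ∩ L₀) − g| ≤ ε_B2. Then |G − Ĝ| ≤ 2 · min(γ_A, γ_B1, γ_B2) + ε_B2 · (2γ_A + γ_B1) + ε_B1 · γ_B2. -/
open MeasureTheory

/-!
On one slice `L`, conditioning on the third event turns both `P(Y | V ∩ L)` and `P(Y | V̂ ∩ L)` into
`P(Y | V ∩ V̂ ∩ L)` plus a correction, so their difference is `D = r (b - a) - p (c - a)`, where
`a, b, c` are the rates of `Y` on the cells `V ∩ V̂`, `V ∩ V̂ᶜ`, `Vᶜ ∩ V̂`. The error `G - Ĝ` is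
`D₁ - D₀`, and each of the three conditions comes with its own way of bounding it:

* (A) bounds `D₁` and `D₀` separately: in `D = r (b - a) + p (a - c)` the increments are at most
  `1 - a` and `a`, which add up to `1`;
* (B1) writes `D = (p - r) (a - c) + r (b - c)`, where `p₁ - r₁` and `p₀ - r₀` are small and
  `r (b - c)` changes little from one slice to the other;
* (B2) replaces the error rates of slice `0` by those of slice `1`, after which `D` is linear in the
  rate differences, whose common part `g` it does not see.
-/

section Algebra

variable {R : Type*} [CommRing R]

/-- The difference `P(Y | V) - P(Y | V̂)` on one slice, expressed through the precision error
`p = P(Vᶜ | V̂)`, the recall error `r = P(V̂ᶜ | V)`, and the rates `a`, `b`, `c` of `Y` on the cells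
`V ∩ V̂`, `V ∩ V̂ᶜ`, `Vᶜ ∩ V̂`. -/
def proxyDiscrepancy (p r a b c : R) : R := r * (b - a) - p * (c - a)

lemma proxyDiscrepancy_swap (p r a b c : R) :
    proxyDiscrepancy r p a c b = -proxyDiscrepancy p r a b c := by
  unfold proxyDiscrepancy; ring

variable [LinearOrder R] [IsStrictOrderedRing R]
  {p p₀ p₁ r r₀ r₁ a a₀ a₁ b b₀ b₁ c c₀ c₁ m s t g δ ε : R}

lemma proxyDiscrepancy_le (hp : p ∈ Set.Icc 0 m) (hr : r ∈ Set.Icc 0 m)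
    (ha : a ∈ Set.Icc s t) (hb : b ≤ t) (hc : s ≤ c) :
    proxyDiscrepancy p r a b c ≤ m * (t - s) :=
  calc proxyDiscrepancy p r a b c
      = r * (b - a) + p * (a - c) := by unfold proxyDiscrepancy; ring
    _ ≤ r * (t - a) + p * (a - s) :=
        add_le_add (mul_le_mul_of_nonneg_left (sub_le_sub_right hb a) hr.1)
          (mul_le_mul_of_nonneg_left (sub_le_sub_left hc a) hp.1)
    _ ≤ m * (t - a) + m * (a - s) :=
        add_le_add (mul_le_mul_of_nonneg_right hr.2 (sub_nonneg.2 ha.2))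
          (mul_le_mul_of_nonneg_right hp.2 (sub_nonneg.2 ha.1))
    _ = m * (t - s) := by ring

lemma abs_proxyDiscrepancy_le (hp : p ∈ Set.Icc 0 m) (hr : r ∈ Set.Icc 0 m)
    (ha : a ∈ Set.Icc s t) (hb : b ∈ Set.Icc s t) (hc : c ∈ Set.Icc s t) :
    |proxyDiscrepancy p r a b c| ≤ m * (t - s) := by
  rw [abs_le', ← proxyDiscrepancy_swap]
  exact ⟨proxyDiscrepancy_le hp hr ha hb.2 hc.1, proxyDiscrepancy_le hr hp ha hc.2 hb.1⟩

lemma abs_mul_le_mul_of_abs_le {x y : R} (hx : |x| ≤ s) (hy : |y| ≤ t) : |x * y| ≤ s * t :=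
  (abs_mul x y).trans_le (mul_le_mul hx hy (abs_nonneg y) ((abs_nonneg x).trans hx))

lemma abs_proxyDiscrepancy_sub_le_of_abs_precision_sub_recall_le
    (hpr₀ : |p₀ - r₀| ≤ s) (hpr₁ : |p₁ - r₁| ≤ s) (hr₁ : |r₁| ≤ m) (hr : |r₀ - r₁| ≤ t)
    (hac₀ : |a₀ - c₀| ≤ 1) (hac₁ : |a₁ - c₁| ≤ 1) (hbc₀ : |b₀ - c₀| ≤ δ)
    (hb : |b₁ - b₀ - g| ≤ ε) (hc : |c₁ - c₀ - g| ≤ ε) :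
    |proxyDiscrepancy p₁ r₁ a₁ b₁ c₁ - proxyDiscrepancy p₀ r₀ a₀ b₀ c₀|
      ≤ 2 * s + 2 * ε * m + δ * t := by
  have decomposition : proxyDiscrepancy p₁ r₁ a₁ b₁ c₁ - proxyDiscrepancy p₀ r₀ a₀ b₀ c₀
      = (p₁ - r₁) * (a₁ - c₁) - (p₀ - r₀) * (a₀ - c₀)
        + r₁ * ((b₁ - b₀ - g) - (c₁ - c₀ - g)) - (r₀ - r₁) * (b₀ - c₀) := by
    unfold proxyDiscrepancy; ring
  have slice_one := abs_mul_le_mul_of_abs_le hpr₁ hac₁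
  have slice_zero := abs_mul_le_mul_of_abs_le hpr₀ hac₀
  have model_change := abs_mul_le_mul_of_abs_le hr₁ ((abs_sub _ _).trans (add_le_add hb hc))
  have recall_change := abs_mul_le_mul_of_abs_le hr hbc₀
  rw [decomposition]
  calc |(p₁ - r₁) * (a₁ - c₁) - (p₀ - r₀) * (a₀ - c₀)
        + r₁ * ((b₁ - b₀ - g) - (c₁ - c₀ - g)) - (r₀ - r₁) * (b₀ - c₀)|
      ≤ |(p₁ - r₁) * (a₁ - c₁)| + |(p₀ - r₀) * (a₀ - c₀)|
        + |r₁ * ((b₁ - b₀ - g) - (c₁ - c₀ - g))| + |(r₀ - r₁) * (b₀ - c₀)| :=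
        (abs_sub _ _).trans (add_le_add_left
          ((abs_add_le _ _).trans (add_le_add_left (abs_sub _ _) _)) _)
    _ ≤ s * 1 + s * 1 + m * (ε + ε) + t * δ := by gcongr
    _ = 2 * s + 2 * ε * m + δ * t := by ring

lemma abs_proxyDiscrepancy_sub_le_of_abs_error_sub_le
    (hp₁ : p₁ ∈ Set.Icc 0 m) (hr₁ : r₁ ∈ Set.Icc 0 m)
    (hp : |p₀ - p₁| ≤ t) (hr : |r₀ - r₁| ≤ t) (hba₀ : |b₀ - a₀| ≤ 1) (hca₀ : |c₀ - a₀| ≤ 1)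
    (ha : |a₁ - a₀ - g| ≤ ε) (hb : |b₁ - b₀ - g| ≤ ε) (hc : |c₁ - c₀ - g| ≤ ε) :
    |proxyDiscrepancy p₁ r₁ a₁ b₁ c₁ - proxyDiscrepancy p₀ r₀ a₀ b₀ c₀|
      ≤ 2 * t + 2 * ε * m := by
  have decomposition : proxyDiscrepancy p₁ r₁ a₁ b₁ c₁ - proxyDiscrepancy p₀ r₀ a₀ b₀ c₀
      = (p₀ - p₁) * (c₀ - a₀) - (r₀ - r₁) * (b₀ - a₀)
        + proxyDiscrepancy p₁ r₁ (a₁ - a₀ - g) (b₁ - b₀ - g) (c₁ - c₀ - g) := by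
    unfold proxyDiscrepancy; ring
  have recall_change := abs_mul_le_mul_of_abs_le hr hba₀
  have precision_change := abs_mul_le_mul_of_abs_le hp hca₀
  have model_change :=
    abs_proxyDiscrepancy_le hp₁ hr₁ (abs_le.1 ha) (abs_le.1 hb) (abs_le.1 hc)
  rw [decomposition]
  calc |(p₀ - p₁) * (c₀ - a₀) - (r₀ - r₁) * (b₀ - a₀)
        + proxyDiscrepancy p₁ r₁ (a₁ - a₀ - g) (b₁ - b₀ - g) (c₁ - c₀ - g)|
      ≤ |(p₀ - p₁) * (c₀ - a₀)| + |(r₀ - r₁) * (b₀ - a₀)|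
        + |proxyDiscrepancy p₁ r₁ (a₁ - a₀ - g) (b₁ - b₀ - g) (c₁ - c₀ - g)| :=
        (abs_add_le _ _).trans (add_le_add_left (abs_sub _ _) _)
    _ ≤ t * 1 + t * 1 + m * (ε - -ε) := by gcongr
    _ = 2 * t + 2 * ε * m := by ring

end Algebra

section CondP

variable {Ω : Type*} [MeasurableSpace Ω] (μ : Measure Ω) [IsFiniteMeasure μ]

lemma condP_mem_Icc (A B : Set Ω) : condP μ A B ∈ Set.Icc 0 1 :=
  ⟨by unfold condP; positivity,
    div_le_one_of_le₀ (measureReal_mono Set.inter_subset_right) measureReal_nonneg⟩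

lemma abs_condP_sub_condP_le_one (A B C D : Set Ω) : |condP μ A B - condP μ C D| ≤ 1 :=
  abs_sub_le_of_nonneg_of_le (condP_mem_Icc μ A B).1 (condP_mem_Icc μ A B).2
    (condP_mem_Icc μ C D).1 (condP_mem_Icc μ C D).2

lemma condP_mul_measureReal (A B : Set Ω) : condP μ A B * μ.real B = μ.real (A ∩ B) :=
  div_mul_cancel_of_imp fun hB ↦
    le_antisymm (hB ▸ measureReal_mono Set.inter_subset_right) measureReal_nonneg

variable {μ}

lemma condP_sub_condP_inter {B S : Set Ω} (A : Set Ω) (hS : MeasurableSet S) (hB : μ B ≠ 0) :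
    condP μ A B - condP μ A (B ∩ S)
      = condP μ Sᶜ B * (condP μ A (B ∩ Sᶜ) - condP μ A (B ∩ S)) := by
  have split_B : μ.real (B ∩ S) + μ.real (B ∩ Sᶜ) = μ.real B := by
    rw [← Set.sdiff_eq, measureReal_inter_add_sdiff hS]
  have split_A : μ.real (A ∩ (B ∩ S)) + μ.real (A ∩ (B ∩ Sᶜ)) = μ.real (A ∩ B) := by
    rw [← Set.inter_assoc, ← Set.inter_assoc, ← Set.sdiff_eq, measureReal_inter_add_sdiff hS]
  have weight : condP μ Sᶜ B * μ.real B = μ.real (B ∩ Sᶜ) := by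
    rw [condP_mul_measureReal, Set.inter_comm]
  refine mul_right_cancel₀ (measureReal_ne_zero_iff (by finiteness) |>.2 hB) ?_
  linear_combination condP_mul_measureReal μ A B - condP_mul_measureReal μ A (B ∩ S)
    - condP_mul_measureReal μ A (B ∩ Sᶜ) - split_A + condP μ A (B ∩ S) * split_B
    - (condP μ A (B ∩ Sᶜ) - condP μ A (B ∩ S)) * weight

lemma condP_sub_condP_eq_proxyDiscrepancy {V Vh L : Set Ω} (Y : Set Ω) (hV : MeasurableSet V)
    (hVh : MeasurableSet Vh) (hVL : μ (V ∩ L) ≠ 0) (hVhL : μ (Vh ∩ L) ≠ 0) :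
    condP μ Y (V ∩ L) - condP μ Y (Vh ∩ L)
      = proxyDiscrepancy (condP μ Vᶜ (Vh ∩ L)) (condP μ Vhᶜ (V ∩ L))
          (condP μ Y (V ∩ Vh ∩ L)) (condP μ Y (V ∩ Vhᶜ ∩ L)) (condP μ Y (Vᶜ ∩ Vh ∩ L)) := by
  have through_V := condP_sub_condP_inter Y hVh hVL
  have through_Vh := condP_sub_condP_inter Y hV hVhL
  rw [Set.inter_right_comm V L, Set.inter_right_comm V L] at through_V
  rw [Set.inter_right_comm Vh L, Set.inter_right_comm Vh L, Set.inter_comm Vh V,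
    Set.inter_comm Vh Vᶜ] at through_Vh
  unfold proxyDiscrepancy
  linear_combination through_V - through_Vh

end CondP

theorem stmt_12_general {Ω : Type*} [MeasurableSpace Ω] (μ : Measure Ω) [IsFiniteMeasure μ]
    (Y V Vh : Set Ω) (L : Bool → Set Ω) (γA γB1 γB2 εB1 εB2 g : ℝ)
    (hV : MeasurableSet V) (hVh : MeasurableSet Vh)
    (hposCells : ∀ (l a b : Bool), (a, b) ≠ (false, false) →
      0 < μ (ev V a ∩ ev Vh b ∩ L l))
    (hA_prec : ∀ l : Bool, condP μ Vᶜ (Vh ∩ L l) ≤ γA)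
    (hA_rec : ∀ l : Bool, condP μ Vhᶜ (V ∩ L l) ≤ γA)
    (hB1_pr : ∀ l : Bool,
      |condP μ Vᶜ (Vh ∩ L l) - condP μ Vhᶜ (V ∩ L l)| ≤ γB1)
    (hB1_diag : |condP μ Y (V ∩ Vhᶜ ∩ L false) - condP μ Y (Vᶜ ∩ Vh ∩ L false)| ≤ εB1)
    (hB2_prec : |condP μ Vᶜ (Vh ∩ L false) - condP μ Vᶜ (Vh ∩ L true)| ≤ γB2)
    (hB2_rec : |condP μ Vhᶜ (V ∩ L false) - condP μ Vhᶜ (V ∩ L true)| ≤ γB2)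
    (hB2_mc : ∀ a b : Bool, (a, b) ≠ (false, false) →
      |condP μ Y (ev V a ∩ ev Vh b ∩ L true)
        - condP μ Y (ev V a ∩ ev Vh b ∩ L false) - g| ≤ εB2) :
    |(condP μ Y (V ∩ L true) - condP μ Y (V ∩ L false))
      - (condP μ Y (Vh ∩ L true) - condP μ Y (Vh ∩ L false))|
      ≤ 2 * min γA (min γB1 γB2) + 2 * εB2 * γA + εB1 * γB2 := by
  let D (l : Bool) : ℝ := proxyDiscrepancy (condP μ Vᶜ (Vh ∩ L l)) (condP μ Vhᶜ (V ∩ L l))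
    (condP μ Y (V ∩ Vh ∩ L l)) (condP μ Y (V ∩ Vhᶜ ∩ L l)) (condP μ Y (Vᶜ ∩ Vh ∩ L l))
  have cell_pos l : 0 < μ (V ∩ Vh ∩ L l) := hposCells l true true (by decide)
  have slice_eq l : condP μ Y (V ∩ L l) - condP μ Y (Vh ∩ L l) = D l :=
    condP_sub_condP_eq_proxyDiscrepancy Y hV hVh
      (measure_pos_of_superset (by gcongr; exact Set.inter_subset_left) (cell_pos l).ne').ne'
      (measure_pos_of_superset (by gcongr; exact Set.inter_subset_right) (cell_pos l).ne').ne'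
  have prec_mem l : condP μ Vᶜ (Vh ∩ L l) ∈ Set.Icc 0 γA := ⟨(condP_mem_Icc μ _ _).1, hA_prec l⟩
  have rec_mem l : condP μ Vhᶜ (V ∩ L l) ∈ Set.Icc 0 γA := ⟨(condP_mem_Icc μ _ _).1, hA_rec l⟩
  have slice_le l : |D l| ≤ γA * (1 - 0) :=
    abs_proxyDiscrepancy_le (prec_mem l) (rec_mem l)
      (condP_mem_Icc μ _ _) (condP_mem_Icc μ _ _) (condP_mem_Icc μ _ _)
  have bound_A : |D true - D false| ≤ 2 * γA := by
    linarith [abs_sub (D true) (D false), slice_le true, slice_le false]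
  have bound_B1 : |D true - D false| ≤ 2 * γB1 + 2 * εB2 * γA + εB1 * γB2 :=
    abs_proxyDiscrepancy_sub_le_of_abs_precision_sub_recall_le (hB1_pr false) (hB1_pr true)
      ((abs_of_nonneg (rec_mem true).1).trans_le (hA_rec true)) hB2_rec
      (abs_condP_sub_condP_le_one μ _ _ _ _) (abs_condP_sub_condP_le_one μ _ _ _ _)
      hB1_diag (hB2_mc true false (by decide)) (hB2_mc false true (by decide))
  have bound_B2 : |D true - D false| ≤ 2 * γB2 + 2 * εB2 * γA :=
    abs_proxyDiscrepancy_sub_le_of_abs_error_sub_le (prec_mem true) (rec_mem true) hB2_prec hB2_rec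
      (abs_condP_sub_condP_le_one μ _ _ _ _) (abs_condP_sub_condP_le_one μ _ _ _ _)
      (hB2_mc true true (by decide)) (hB2_mc true false (by decide))
      (hB2_mc false true (by decide))
  have model_term_nonneg : 0 ≤ εB2 * γA :=
    mul_nonneg ((abs_nonneg _).trans (hB2_mc true true (by decide)))
      ((rec_mem true).1.trans (hA_rec true))
  have diag_term_nonneg : 0 ≤ εB1 * γB2 :=
    mul_nonneg ((abs_nonneg _).trans hB1_diag) ((abs_nonneg _).trans hB2_rec)
  rw [sub_sub_sub_comm, slice_eq, slice_eq]
  rcases min_choice γA (min γB1 γB2) with hA | hB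
  · rw [hA]; linarith
  rcases min_choice γB1 γB2 with hB1 | hB2
  · rw [hB, hB1]; exact bound_B1
  · rw [hB, hB2]; linarith

/-- Combined refined bound: under conditions (A), (B1) and (B2),
`|G - Ĝ| ≤ 2 min(γ_A, γ_B1, γ_B2) + ε_B2 (2 γ_A + γ_B1) + ε_B1 γ_B2`. -/
theorem stmt_12 {Ω : Type*} [MeasurableSpace Ω] (μ : Measure Ω) [IsProbabilityMeasure μ]
    (Y V Vh : Set Ω) (L : Bool → Set Ω) (γA γB1 γB2 εB1 εB2 g : ℝ)
    (hY : MeasurableSet Y) (hV : MeasurableSet V) (hVh : MeasurableSet Vh)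
    (hL : ∀ l, MeasurableSet (L l))
    (hγA : γA ∈ Set.Icc (0 : ℝ) 1)
    (hγB1 : γB1 ∈ Set.Icc (0 : ℝ) 1) (hγB2 : γB2 ∈ Set.Icc (0 : ℝ) 1)
    (hεB1 : εB1 ∈ Set.Icc (0 : ℝ) 1) (hεB2 : εB2 ∈ Set.Icc (0 : ℝ) 1)
    (hposVL : ∀ l, 0 < μ (V ∩ L l))
    (hposVhL : ∀ l, 0 < μ (Vh ∩ L l))
    (hposCells : ∀ (l a b : Bool), (a, b) ≠ (false, false) →
      0 < μ (ev V a ∩ ev Vh b ∩ L l))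
    (hA_prec : ∀ l : Bool, condP μ Vᶜ (Vh ∩ L l) ≤ γA)
    (hA_rec : ∀ l : Bool, condP μ Vhᶜ (V ∩ L l) ≤ γA)
    (hB1_pr : ∀ l : Bool,
      |condP μ Vᶜ (Vh ∩ L l) - condP μ Vhᶜ (V ∩ L l)| ≤ γB1)
    (hB1_diag : ∀ l : Bool,
      |condP μ Y (V ∩ Vhᶜ ∩ L l) - condP μ Y (Vᶜ ∩ Vh ∩ L l)| ≤ εB1)
    (hB2_prec : |condP μ Vᶜ (Vh ∩ L false) - condP μ Vᶜ (Vh ∩ L true)| ≤ γB2)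
    (hB2_rec : |condP μ Vhᶜ (V ∩ L false) - condP μ Vhᶜ (V ∩ L true)| ≤ γB2)
    (hB2_mc : ∀ a b : Bool, (a, b) ≠ (false, false) →
      |condP μ Y (ev V a ∩ ev Vh b ∩ L true)
        - condP μ Y (ev V a ∩ ev Vh b ∩ L false) - g| ≤ εB2) :
    |(condP μ Y (V ∩ L true) - condP μ Y (V ∩ L false))
      - (condP μ Y (Vh ∩ L true) - condP μ Y (Vh ∩ L false))|
      ≤ 2 * min γA (min γB1 γB2) + εB2 * (2 * γA + γB1) + εB1 * γB2 := by
  have := stmt_12_general μ Y V Vh L γA γB1 γB2 εB1 εB2 g hV hVh hposCells hA_prec hA_rec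
    hB1_pr (hB1_diag false) hB2_prec hB2_rec hB2_mc
  linarith [mul_nonneg hεB2.1 hγB1.1]
end
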